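/- arXiv:0808.3549 — 8 statements merged into one kernel-verified Lean document; each statement's English description precedes it below -/
import Mathlib

section
/- Define in Λ₇ the classes L̂ = 8L − 3(E₁+⋯+E₇) and, for 1 ≤ i ≤ 7, Êᵢ = 3L − 2Eᵢ − Σ_{j≠i} Eⱼ. Then the ℤ-linear map ψ : Λ₇ → Λ₇ determined by ψ(L) = L̂ and ψ(Eᵢ) = Êᵢ is a group automorphism of Λ₇ which preserves the bilinear form (⟨ψ(x), ψ(y)⟩ = ⟨x, y⟩ for all x, y ∈ Λ₇) and satisfies ψ(K) = K; moreover its ℚ-linear extension to ℚ ⊗ Λ₇ sends ε₇ := (1/12)(6L − 2(E₁+E₂+E₃) − 3(E₄+E₅+E₆+E₇)) to −ε₇. -/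
/-!
The lattice is special at `k = 7` because `⟨K, K⟩ = 9 - k = 2`, so that the reflection
`x ↦ x - ⟨K, x⟩ K` is integral and orthogonal. As `⟨K, L⟩ = -3` and `⟨K, Eᵢ⟩ = -1`, the negative of
this reflection sends `L` to `L̂` and `Eᵢ` to `Êᵢ`, hence equals `ψ`. It fixes `K` and acts as `-1`
on the orthogonal complement of `K`, which contains `12 ε₇`.
-/

namespace Stmt0

/-- The class `L` in `Λ₇ = ℤ⁸` (coordinate 0). -/
def L : Fin 8 → ℤ := fun j => if j = 0 then 1 else 0

/-- The classes `E₁,…,E₇` (indexed by `Fin 7`, so `E i` is `E_{i+1}`). -/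
def E (i : Fin 7) : Fin 8 → ℤ := fun j => if j = i.succ then 1 else 0

/-- The intersection form on `Λ₇`. -/
def form (x y : Fin 8 → ℤ) : ℤ := x 0 * y 0 - ∑ i : Fin 7, x i.succ * y i.succ

/-- The canonical class `K = −3L + E₁ + ⋯ + E₇`. -/
def K : Fin 8 → ℤ := (-3 : ℤ) • L + ∑ i : Fin 7, E i

/-- `L̂ = 8L − 3(E₁+⋯+E₇)`. -/
def Lhat : Fin 8 → ℤ := (8 : ℤ) • L - (3 : ℤ) • ∑ i : Fin 7, E i

/-- `Êᵢ = 3L − 2Eᵢ − Σ_{j≠i} Eⱼ = 3L − Eᵢ − Σⱼ Eⱼ`. -/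
def Ehat (i : Fin 7) : Fin 8 → ℤ := (3 : ℤ) • L - E i - ∑ j : Fin 7, E j

/-- The ℤ-linear map determined by `ψ(L) = L̂`, `ψ(Eᵢ) = Êᵢ`. -/
def psi (x : Fin 8 → ℤ) : Fin 8 → ℤ := x 0 • Lhat + ∑ i : Fin 7, x i.succ • Ehat i

/-- `L` viewed in `ℚ ⊗ Λ₇`. -/
def LQ : Fin 8 → ℚ := fun j => (L j : ℚ)

/-- `Eᵢ` viewed in `ℚ ⊗ Λ₇`. -/
def EQ (i : Fin 7) : Fin 8 → ℚ := fun j => (E i j : ℚ)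

/-- `ε₇ = (1/12)(6L − 2(E₁+E₂+E₃) − 3(E₄+E₅+E₆+E₇))` in `ℚ ⊗ Λ₇`. -/
def eps7 : Fin 8 → ℚ :=
  (1 / 12 : ℚ) • ((6 : ℚ) • LQ - (2 : ℚ) • (EQ 0 + EQ 1 + EQ 2)
    - (3 : ℚ) • (EQ 3 + EQ 4 + EQ 5 + EQ 6))

theorem isOrthogonal_reflection_of_apply_self_eq_two {R M : Type*} [CommRing R] [AddCommGroup M]
    [Module R M] {B : LinearMap.BilinForm R M} {v : M} (hB : B.IsSymm) (hv : B v v = 2) :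
    B.IsOrthogonal (Module.reflection hv) := by
  intro x y
  have hxv : B x v = B v x := hB.eq x v
  simp only [Module.reflection_apply, map_sub, map_smul, LinearMap.sub_apply,
    LinearMap.smul_apply, smul_eq_mul, hxv, hv]
  ring

/-- The intersection form `form` on `Λ₇`, bundled as a bilinear form. -/
def intersectionForm : LinearMap.BilinForm ℤ (Fin 8 → ℤ) :=
  LinearMap.mk₂ ℤ form
    (fun x y z => by simp only [form, Pi.add_apply, add_mul, Finset.sum_add_distrib]; ring)
    (fun c x y => by
      simp only [form, Pi.smul_apply, smul_eq_mul, mul_sub, Finset.mul_sum, mul_assoc])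
    (fun x y z => by simp only [form, Pi.add_apply, mul_add, Finset.sum_add_distrib]; ring)
    (fun c x y => by
      simp only [form, Pi.smul_apply, smul_eq_mul, mul_sub, Finset.mul_sum, mul_left_comm])

theorem intersectionForm_apply (x y : Fin 8 → ℤ) : intersectionForm x y = form x y := rfl

theorem isSymm_intersectionForm : intersectionForm.IsSymm where
  eq x y := by simp only [intersectionForm_apply, form, mul_comm]

theorem intersectionForm_K_K : intersectionForm K K = 2 := by decide

theorem intersectionForm_K_L : intersectionForm K L = -3 := by decide

theorem intersectionForm_K_E (i : Fin 7) : intersectionForm K (E i) = -1 := by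
  revert i
  decide

/-- The Geiser automorphism of `Λ₇`: the negative of the reflection in the canonical class. It is
used to compute with `psi`, which is shown to be its underlying function. -/
def geiser : (Fin 8 → ℤ) ≃ₗ[ℤ] (Fin 8 → ℤ) :=
  (Module.reflection intersectionForm_K_K).trans (LinearEquiv.neg ℤ)

theorem geiser_apply (x : Fin 8 → ℤ) : geiser x = intersectionForm K x • K - x := by
  simp only [geiser, LinearEquiv.trans_apply, LinearEquiv.neg_apply, Module.reflection_apply,
    neg_sub]

theorem isOrthogonal_geiser : intersectionForm.IsOrthogonal geiser := by
  intro x y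
  simp only [geiser, LinearEquiv.trans_apply, LinearEquiv.neg_apply, map_neg, LinearMap.neg_apply,
    neg_neg]
  exact isOrthogonal_reflection_of_apply_self_eq_two isSymm_intersectionForm
    intersectionForm_K_K x y

theorem geiser_K : geiser K = K := by
  rw [geiser_apply, intersectionForm_K_K, two_smul, add_sub_cancel_right]

theorem geiser_eq_neg_of_intersectionForm_K_eq_zero {x : Fin 8 → ℤ}
    (hx : intersectionForm K x = 0) : geiser x = -x := by
  rw [geiser_apply, hx, zero_smul, zero_sub]

theorem geiser_L : geiser L = Lhat := by
  rw [geiser_apply, intersectionForm_K_L, K, Lhat]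
  module

theorem geiser_E (i : Fin 7) : geiser (E i) = Ehat i := by
  rw [geiser_apply, intersectionForm_K_E, K, Ehat]
  module

theorem eq_smul_L_add_sum_smul_E (x : Fin 8 → ℤ) :
    x = x 0 • L + ∑ i : Fin 7, x i.succ • E i := by
  ext j
  cases j using Fin.cases with
  | zero => simp [L, E, (Fin.succ_ne_zero _).symm]
  | succ i => simp [L, E]

theorem psi_eq_geiser : psi = geiser := by
  ext1 x
  calc psi x = x 0 • geiser L + ∑ i : Fin 7, x i.succ • geiser (E i) := by
        simp only [psi, geiser_L, geiser_E]
    _ = geiser (x 0 • L + ∑ i : Fin 7, x i.succ • E i) := by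
        simp only [map_add, map_sum, map_smul]
    _ = geiser x := by rw [← eq_smul_L_add_sum_smul_E]

/-- The integral class `12 ε₇`, through which `ε₇` is compared with `Λ₇`. -/
def twelveEps7 : Fin 8 → ℤ :=
  (6 : ℤ) • L - (2 : ℤ) • (E 0 + E 1 + E 2) - (3 : ℤ) • (E 3 + E 4 + E 5 + E 6)

theorem intersectionForm_K_twelveEps7 : intersectionForm K twelveEps7 = 0 := by
  simp only [twelveEps7, map_sub, map_add, map_smul, intersectionForm_K_L, intersectionForm_K_E]
  norm_num

theorem eps7_eq_smul_twelveEps7 : eps7 = (1 / 12 : ℚ) • fun j => (twelveEps7 j : ℚ) := by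
  ext j
  simp [eps7, twelveEps7, LQ, EQ]

theorem map_eps7_eq_neg {φ : (Fin 8 → ℚ) →ₗ[ℚ] (Fin 8 → ℚ)}
    (hφ : ∀ x : Fin 8 → ℤ, φ (fun j => (x j : ℚ)) = fun j => (geiser x j : ℚ)) :
    φ eps7 = -eps7 := by
  have geiser_twelveEps7 : geiser twelveEps7 = -twelveEps7 :=
    geiser_eq_neg_of_intersectionForm_K_eq_zero intersectionForm_K_twelveEps7
  calc φ eps7 = (1 / 12 : ℚ) • fun j => ((-twelveEps7) j : ℚ) := by
        rw [eps7_eq_smul_twelveEps7, map_smul, hφ, geiser_twelveEps7]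
    _ = -eps7 := by
        ext j
        simp [eps7_eq_smul_twelveEps7]

theorem geiser_lattice_automorphism :
    psi L = Lhat ∧ (∀ i : Fin 7, psi (E i) = Ehat i) ∧
    (∀ x y : Fin 8 → ℤ, psi (x + y) = psi x + psi y) ∧
    Function.Bijective psi ∧
    (∀ x y : Fin 8 → ℤ, form (psi x) (psi y) = form x y) ∧
    psi K = K ∧
    (∀ φ : (Fin 8 → ℚ) →ₗ[ℚ] (Fin 8 → ℚ),
      (∀ x : Fin 8 → ℤ, φ (fun j => (x j : ℚ)) = fun j => (psi x j : ℚ)) →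
      φ eps7 = -eps7) := by
  rw [psi_eq_geiser]
  exact ⟨geiser_L, geiser_E, map_add geiser, geiser.bijective, isOrthogonal_geiser, geiser_K,
    fun _ => map_eps7_eq_neg⟩

end Stmt0
end

section
/- Define in Λ₈ the classes L̃ = 17L − 6(E₁+⋯+E₈) and, for 1 ≤ i ≤ 8, Ẽᵢ = 6L − 3Eᵢ − 2Σ_{j≠i} Eⱼ. Then the ℤ-linear map ψ : Λ₈ → Λ₈ determined by ψ(L) = L̃ and ψ(Eᵢ) = Ẽᵢ is a group automorphism of Λ₈ which preserves the bilinear form (⟨ψ(x), ψ(y)⟩ = ⟨x, y⟩ for all x, y ∈ Λ₈) and satisfies ψ(K) = K; moreover its ℚ-linear extension to ℚ ⊗ Λ₈ sends ε₈ := (1/30)(15L − 5(E₁+E₂+E₃) − 6(E₄+E₅+E₆+E₇+E₈)) to −ε₈. -/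
namespace Stmt1

/-- The class `L` in `Λ₈ = ℤ⁹` (coordinate 0). -/
def L : Fin 9 → ℤ := fun j => if j = 0 then 1 else 0

/-- The classes `E₁,…,E₈` (indexed by `Fin 8`, so `E i` is `E_{i+1}`). -/
def E (i : Fin 8) : Fin 9 → ℤ := fun j => if j = i.succ then 1 else 0

/-- The intersection form on `Λ₈`. -/
def form (x y : Fin 9 → ℤ) : ℤ := x 0 * y 0 - ∑ i : Fin 8, x i.succ * y i.succ

/-- The canonical class `K = −3L + E₁ + ⋯ + E₈`. -/
def K : Fin 9 → ℤ := (-3 : ℤ) • L + ∑ i : Fin 8, E i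

/-- `L̃ = 17L − 6(E₁+⋯+E₈)`. -/
def Ltil : Fin 9 → ℤ := (17 : ℤ) • L - (6 : ℤ) • ∑ i : Fin 8, E i

/-- `Ẽᵢ = 6L − 3Eᵢ − 2Σ_{j≠i} Eⱼ = 6L − Eᵢ − 2Σⱼ Eⱼ`. -/
def Etil (i : Fin 8) : Fin 9 → ℤ := (6 : ℤ) • L - E i - (2 : ℤ) • ∑ j : Fin 8, E j

/-- The ℤ-linear map determined by `ψ(L) = L̃`, `ψ(Eᵢ) = Ẽᵢ`. -/
def psi (x : Fin 9 → ℤ) : Fin 9 → ℤ := x 0 • Ltil + ∑ i : Fin 8, x i.succ • Etil i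

/-- `L` viewed in `ℚ ⊗ Λ₈`. -/
def LQ : Fin 9 → ℚ := fun j => (L j : ℚ)

/-- `Eᵢ` viewed in `ℚ ⊗ Λ₈`. -/
def EQ (i : Fin 8) : Fin 9 → ℚ := fun j => (E i j : ℚ)

/-- `ε₈ = (1/30)(15L − 5(E₁+E₂+E₃) − 6(E₄+E₅+E₆+E₇+E₈))` in `ℚ ⊗ Λ₈`. -/
def eps8 : Fin 9 → ℚ :=
  (1 / 30 : ℚ) • ((15 : ℚ) • LQ - (5 : ℚ) • (EQ 0 + EQ 1 + EQ 2)
    - (6 : ℚ) • (EQ 3 + EQ 4 + EQ 5 + EQ 6 + EQ 7))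

/-!
The canonical class has square `⟨K, K⟩ = 9 - 8 = 1`, so `x ↦ 2⟨K, x⟩K - x`, the negative of the
reflection in `K`, is an integral isometry of `Λ₈` fixing `K` and acting as `-1` on `K^⊥`. Since
`⟨K, L⟩ = -3` and `⟨K, Eᵢ⟩ = -1`, it sends `L` to `-6K - L = L̃` and `Eᵢ` to `-2K - Eᵢ = Ẽᵢ`, so it
is `ψ`. Finally `30 ε₈` is an integral class orthogonal to `K`.
-/

section NegReflection

open LinearMap.IsReflective

variable {R M : Type*} [CommRing R] [AddCommGroup M] [Module R M]
  {B : LinearMap.BilinForm R M} {v : M}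

theorem isReflective_of_apply_self_eq_one (hv : B v v = 1) : B.IsReflective v where
  regular := hv ▸ isRegular_one
  dvd_two_mul _ := hv ▸ one_dvd _

/-- The negative of the reflection in a vector `v` of square one: it fixes `v` and acts as `-1` on
the orthogonal complement of `v`. -/
noncomputable def negReflection (hv : B v v = 1) : M ≃ₗ[R] M :=
  (Module.reflection (coroot_apply_self B (isReflective_of_apply_self_eq_one hv))).trans
    (LinearEquiv.neg R)

theorem negReflection_apply (hv : B v v = 1) (x : M) :
    negReflection hv x = (2 * B v x) • v - x := by
  have hcoroot := apply_self_mul_coroot_apply B (isReflective_of_apply_self_eq_one hv) (y := x)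
  rw [hv, one_mul] at hcoroot
  rw [negReflection, LinearEquiv.trans_apply, LinearEquiv.neg_apply, Module.reflection_apply,
    hcoroot, neg_sub]

theorem negReflection_apply_self (hv : B v v = 1) : negReflection hv v = v := by
  rw [negReflection_apply, hv, mul_one, two_smul, add_sub_cancel_right]

theorem negReflection_apply_of_isOrtho (hv : B v v = 1) {x : M} (hx : B v x = 0) :
    negReflection hv x = -x := by
  rw [negReflection_apply, hx, mul_zero, zero_smul, zero_sub]

theorem isOrthogonal_negReflection (hB : LinearMap.IsSymm B) (hv : B v v = 1) :
    B.IsOrthogonal (negReflection hv) := fun x y => by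
  have hreflection := isOrthogonal_reflection B (isReflective_of_apply_self_eq_one hv) hB x y
  simpa only [negReflection, LinearEquiv.coe_coe, LinearEquiv.trans_apply, LinearEquiv.neg_apply,
    map_neg, LinearMap.neg_apply, neg_neg] using hreflection

end NegReflection

/-- The intersection form `form` on `Λ₈`, bundled as a bilinear form. -/
def intersectionForm : LinearMap.BilinForm ℤ (Fin 9 → ℤ) :=
  LinearMap.mk₂ ℤ form
    (fun x y z => by
      simp only [form, Pi.add_apply, add_mul, Finset.sum_add_distrib]
      ring)
    (fun c x y => by
      simp only [form, Pi.smul_apply, smul_eq_mul, mul_assoc, ← Finset.mul_sum, mul_sub])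
    (fun x y z => by
      simp only [form, Pi.add_apply, mul_add, Finset.sum_add_distrib]
      ring)
    (fun c x y => by
      simp only [form, Pi.smul_apply, smul_eq_mul, mul_left_comm, ← Finset.mul_sum, mul_sub])

theorem intersectionForm_apply (x y : Fin 9 → ℤ) : intersectionForm x y = form x y := rfl

theorem isSymm_intersectionForm : LinearMap.IsSymm intersectionForm where
  eq x y := by
    simp only [intersectionForm_apply, form, RingHom.id_apply, mul_comm]

@[simp]
theorem L_zero : L 0 = 1 := rfl

@[simp]
theorem L_succ (i : Fin 8) : L i.succ = 0 := if_neg i.succ_ne_zero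

@[simp]
theorem E_zero (i : Fin 8) : E i 0 = 0 := if_neg i.succ_ne_zero.symm

@[simp]
theorem E_succ (i j : Fin 8) : E i j.succ = if j = i then 1 else 0 := by
  simp only [E, Fin.succ_inj]

theorem K_zero : K 0 = -3 := by
  simp [K]

theorem K_succ (i : Fin 8) : K i.succ = 1 := by
  simp [K]

theorem intersectionForm_K_apply (x : Fin 9 → ℤ) :
    intersectionForm K x = -3 * x 0 - ∑ i : Fin 8, x i.succ := by
  simp only [intersectionForm_apply, form, K_zero, K_succ, one_mul]

theorem intersectionForm_K_L : intersectionForm K L = -3 := by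
  simp [intersectionForm_K_apply]

theorem intersectionForm_K_E (i : Fin 8) : intersectionForm K (E i) = -1 := by
  simp [intersectionForm_K_apply]

theorem intersectionForm_K_K : intersectionForm K K = 1 := by
  simp [intersectionForm_K_apply, K_zero, K_succ]

theorem eq_smul_L_add_sum_smul_E (x : Fin 9 → ℤ) :
    x = x 0 • L + ∑ i : Fin 8, x i.succ • E i := by
  ext j
  cases j using Fin.cases <;> simp

theorem Ltil_eq_smul_K_sub : Ltil = (2 * intersectionForm K L) • K - L := by
  rw [Ltil, intersectionForm_K_L, K]
  module

theorem Etil_eq_smul_K_sub (i : Fin 8) :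
    Etil i = (2 * intersectionForm K (E i)) • K - E i := by
  rw [Etil, intersectionForm_K_E, K]
  module

theorem psi_L : psi L = Ltil := by
  simp [psi]

theorem psi_E (i : Fin 8) : psi (E i) = Etil i := by
  simp [psi, ite_smul]

theorem coe_negReflection_K : ⇑(negReflection intersectionForm_K_K) = psi := by
  ext1 x
  conv_lhs => rw [eq_smul_L_add_sum_smul_E x]
  simp only [map_add, map_sum, map_smul, negReflection_apply, ← Ltil_eq_smul_K_sub,
    ← Etil_eq_smul_K_sub, psi]

/-- The integral class `30 ε₈`. -/
def thirtyEps8 : Fin 9 → ℤ :=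
  (15 : ℤ) • L - (5 : ℤ) • (E 0 + E 1 + E 2) - (6 : ℤ) • (E 3 + E 4 + E 5 + E 6 + E 7)

theorem intersectionForm_K_thirtyEps8 : intersectionForm K thirtyEps8 = 0 := by
  simp only [thirtyEps8, map_sub, map_add, map_smul, intersectionForm_K_L, intersectionForm_K_E]
  norm_num

theorem eps8_eq_smul_thirtyEps8 : eps8 = (1 / 30 : ℚ) • fun j => (thirtyEps8 j : ℚ) := by
  ext j
  simp [eps8, LQ, EQ, thirtyEps8]

theorem psi_thirtyEps8 : psi thirtyEps8 = -thirtyEps8 := by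
  rw [← coe_negReflection_K]
  exact negReflection_apply_of_isOrtho _ intersectionForm_K_thirtyEps8

theorem map_eps8 (φ : (Fin 9 → ℚ) →ₗ[ℚ] (Fin 9 → ℚ))
    (hφ : φ (fun j => (thirtyEps8 j : ℚ)) = fun j => (psi thirtyEps8 j : ℚ)) :
    φ eps8 = -eps8 := by
  have hneg : φ (fun j => (thirtyEps8 j : ℚ)) = -fun j => (thirtyEps8 j : ℚ) := by
    rw [hφ, psi_thirtyEps8]
    ext j
    simp only [Pi.neg_apply, Int.cast_neg]
  rw [eps8_eq_smul_thirtyEps8, map_smul, hneg, smul_neg]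

theorem bertini_lattice_automorphism :
    psi L = Ltil ∧ (∀ i : Fin 8, psi (E i) = Etil i) ∧
    (∀ x y : Fin 9 → ℤ, psi (x + y) = psi x + psi y) ∧
    Function.Bijective psi ∧
    (∀ x y : Fin 9 → ℤ, form (psi x) (psi y) = form x y) ∧
    psi K = K ∧
    (∀ φ : (Fin 9 → ℚ) →ₗ[ℚ] (Fin 9 → ℚ),
      (∀ x : Fin 9 → ℤ, φ (fun j => (x j : ℚ)) = fun j => (psi x j : ℚ)) →
      φ eps8 = -eps8) := by
  refine ⟨psi_L, psi_E, ?additive, ?bijective, ?isometry, ?fixes_K, fun φ hφ => map_eps8 φ (hφ _)⟩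
  all_goals rw [← coe_negReflection_K]
  case additive => exact map_add _
  case bijective => exact LinearEquiv.bijective _
  case isometry => exact isOrthogonal_negReflection isSymm_intersectionForm _
  case fixes_K => exact negReflection_apply_self _

end Stmt1
end

section
/- Let k ∈ {7, 8} and let λ be a real number with 0 < λ ≤ 1. In ℝ ⊗ Λ_k set T_λ = 3L − (E₁+E₂+E₃) − λ(E₄+⋯+E_k). Then ⟨T_λ, E_k⟩ = λ, and every A ∈ Λ_k with ⟨A,A⟩ = −1 and ⟨K,A⟩ = −1 satisfies ⟨T_λ, A⟩ ≥ λ. In other words, the minimum of ⟨T_λ, ·⟩ over the set of such classes A equals λ and is attained at the class E_k. -/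
/-!
The class `T_λ` is affine in `λ`: `T_λ = λ T₁ + (1 - λ) T₀`, where `T₁ = -K` pairs to `1` with
every `A` such that `⟨K, A⟩ = -1`. So the bound `⟨T_λ, A⟩ ≥ λ` for `λ ≤ 1` reduces to
`⟨T₀, A⟩ ≥ 0` for the integral class `T₀ = 3L - E₁ - E₂ - E₃`. Write `d = ⟨L, A⟩` and
`x = ⟨T₀, A⟩`. Applying Cauchy–Schwarz to `⟨A, A⟩ = -1` separately on the first three and on the
remaining, at most five, exceptional coordinates, whose sums are `x - 3d` and `1 - x`, gives
`5 (x - 3d)² + 3 (1 - x)² ≤ 15 (d² + 1)`, that is, `15 (2d - x)² + (x - 6)² ≤ 60`. Hence `x ≥ -1`,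
and `x = -1` would force `2d + 1 = 0`.
-/

namespace Stmt4

/-! Λ₇ = ℤ⁸ -/

/-- The class `L` in `Λ₇` (coordinate 0). -/
def L7 : Fin 8 → ℤ := fun j => if j = 0 then 1 else 0

/-- The classes `E₁,…,E₇` of `Λ₇` (indexed by `Fin 7`). -/
def E7 (i : Fin 7) : Fin 8 → ℤ := fun j => if j = i.succ then 1 else 0

/-- The intersection form on `Λ₇`. -/
def form7 (x y : Fin 8 → ℤ) : ℤ := x 0 * y 0 - ∑ i : Fin 7, x i.succ * y i.succ

/-- The canonical class of `Λ₇`. -/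
def K7 : Fin 8 → ℤ := (-3 : ℤ) • L7 + ∑ i : Fin 7, E7 i

/-- `L` in `ℝ ⊗ Λ₇`. -/
def LR7 : Fin 8 → ℝ := fun j => (L7 j : ℝ)

/-- `Eᵢ` in `ℝ ⊗ Λ₇`. -/
def ER7 (i : Fin 7) : Fin 8 → ℝ := fun j => (E7 i j : ℝ)

/-- The intersection form on `ℝ ⊗ Λ₇`. -/
def formR7 (x y : Fin 8 → ℝ) : ℝ := x 0 * y 0 - ∑ i : Fin 7, x i.succ * y i.succ

/-- `T_λ = 3L − (E₁+E₂+E₃) − λ(E₄+⋯+E₇)` in `ℝ ⊗ Λ₇`. -/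
def T7 (lam : ℝ) : Fin 8 → ℝ :=
  (3 : ℝ) • LR7 - (ER7 0 + ER7 1 + ER7 2) - lam • (ER7 3 + ER7 4 + ER7 5 + ER7 6)

/-! Λ₈ = ℤ⁹ -/

/-- The class `L` in `Λ₈` (coordinate 0). -/
def L8 : Fin 9 → ℤ := fun j => if j = 0 then 1 else 0

/-- The classes `E₁,…,E₈` of `Λ₈` (indexed by `Fin 8`). -/
def E8 (i : Fin 8) : Fin 9 → ℤ := fun j => if j = i.succ then 1 else 0

/-- The intersection form on `Λ₈`. -/
def form8 (x y : Fin 9 → ℤ) : ℤ := x 0 * y 0 - ∑ i : Fin 8, x i.succ * y i.succ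

/-- The canonical class of `Λ₈`. -/
def K8 : Fin 9 → ℤ := (-3 : ℤ) • L8 + ∑ i : Fin 8, E8 i

/-- `L` in `ℝ ⊗ Λ₈`. -/
def LR8 : Fin 9 → ℝ := fun j => (L8 j : ℝ)

/-- `Eᵢ` in `ℝ ⊗ Λ₈`. -/
def ER8 (i : Fin 8) : Fin 9 → ℝ := fun j => (E8 i j : ℝ)

/-- The intersection form on `ℝ ⊗ Λ₈`. -/
def formR8 (x y : Fin 9 → ℝ) : ℝ := x 0 * y 0 - ∑ i : Fin 8, x i.succ * y i.succ

/-- `T_λ = 3L − (E₁+E₂+E₃) − λ(E₄+⋯+E₈)` in `ℝ ⊗ Λ₈`. -/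
def T8 (lam : ℝ) : Fin 9 → ℝ :=
  (3 : ℝ) • LR8 - (ER8 0 + ER8 1 + ER8 2)
    - lam • (ER8 3 + ER8 4 + ER8 5 + ER8 6 + ER8 7)

/-- The intersection form of the `k`-fold blow-up of `ℂP²` with coefficients in `R`, in the basis
`L, E₁, …, E_k`: coordinate `0` is the coefficient of `L`, coordinate `i.succ` that of `E_{i+1}`. -/
def form {R : Type*} [CommRing R] {k : ℕ} (x y : Fin (k + 1) → R) : R :=
  x 0 * y 0 - Fin.tail x ⬝ᵥ Fin.tail y

/-- The canonical class `K = -3L + E₁ + ⋯ + E_k`. -/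
def canonicalClass (k : ℕ) : Fin (k + 1) → ℤ := Fin.cons (-3) 1

/-- The exceptional class `E_{i+1}`. -/
def exceptionalClass (R : Type*) [CommRing R] {k : ℕ} (i : Fin k) : Fin (k + 1) → R :=
  Pi.single i.succ 1

/-- The class `T_λ = 3L - (E₁ + E₂ + E₃) - λ(E₄ + ⋯ + E_k)`. The coefficient ring is arbitrary, so
that `T₀` and `T₁` are also available as integral classes; for `k < 3` only `E₁, …, E_k` occur. -/
def tClass {R : Type*} [CommRing R] (k : ℕ) (lam : R) : Fin (k + 1) → R :=
  Fin.cons 3 fun i => if i.val < 3 then -1 else -lam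

section Form

variable {R : Type*} [CommRing R] {k : ℕ}

lemma form_smul_add_smul_left (a b : R) (x y z : Fin (k + 1) → R) :
    form (a • x + b • y) z = a * form x z + b * form y z := by
  have tail_eq : Fin.tail (a • x + b • y) = a • Fin.tail x + b • Fin.tail y := rfl
  simp only [form, tail_eq, add_dotProduct, smul_dotProduct, Pi.add_apply, Pi.smul_apply,
    smul_eq_mul]
  ring

lemma form_neg_left (x y : Fin (k + 1) → R) : form (-x) y = -form x y := by
  simpa using form_smul_add_smul_left (-1) 0 x 0 y

lemma form_intCast (x y : Fin (k + 1) → ℤ) :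
    form (fun j => (x j : R)) (fun j => (y j : R)) = (form x y : ℤ) := by
  simp [form, dotProduct, Fin.tail]

lemma form_exceptionalClass_right (x : Fin (k + 1) → R) (i : Fin k) :
    form x (exceptionalClass R i) = -x i.succ := by
  have tail_eq : Fin.tail (exceptionalClass R i) = Pi.single i 1 := by
    ext j
    simp [Fin.tail, exceptionalClass, Pi.single_apply]
  rw [form, tail_eq, dotProduct_single_one]
  simp [exceptionalClass, Fin.tail]

lemma tClass_eq_smul_add_smul (lam : R) :
    tClass k lam = lam • tClass k 1 + (1 - lam) • tClass k 0 := by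
  ext j
  cases j using Fin.cases with
  | zero =>
    simp only [tClass, Pi.add_apply, Pi.smul_apply, Fin.cons_zero, smul_eq_mul]
    ring
  | succ i =>
    simp only [tClass, Pi.add_apply, Pi.smul_apply, Fin.cons_succ, smul_eq_mul]
    split_ifs <;> ring

lemma tClass_intCast (n : ℤ) : (fun j => ((tClass k n j : ℤ) : R)) = tClass k (n : R) := by
  ext j
  cases j using Fin.cases with
  | zero => simp [tClass]
  | succ i => by_cases hi : i.val < 3 <;> simp [tClass, hi]

lemma tClass_one_eq_neg_canonicalClass : tClass k (1 : ℤ) = -canonicalClass k := by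
  ext j
  cases j using Fin.cases <;> simp [tClass, canonicalClass]

lemma form_tClass_intCast (lam : R) (A : Fin (k + 1) → ℤ) :
    form (tClass k lam) (fun j => (A j : R)) =
      lam * (-form (canonicalClass k) A : ℤ) + (1 - lam) * (form (tClass k 0) A : ℤ) := by
  rw [tClass_eq_smul_add_smul, form_smul_add_smul_left, ← form_neg_left,
    ← tClass_one_eq_neg_canonicalClass, ← form_intCast, ← form_intCast, tClass_intCast,
    tClass_intCast, Int.cast_one, Int.cast_zero]

lemma form_tClass_exceptionalClass (lam : R) {i : Fin k} (hi : 3 ≤ i.val) :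
    form (tClass k lam) (exceptionalClass R i) = lam := by
  simp [form_exceptionalClass_right, tClass, hi.not_gt]

lemma form_self_eq (x : Fin (k + 1) → R) : form x x = x 0 ^ 2 - ∑ i : Fin k, x i.succ ^ 2 := by
  simp only [form, dotProduct, Fin.tail, sq]

lemma form_canonicalClass_left (A : Fin (k + 1) → ℤ) :
    form (canonicalClass k) A = -3 * A 0 - ∑ i : Fin k, A i.succ := by
  simp [form, canonicalClass, dotProduct, Fin.tail]

lemma form_tClass_zero_left (x : Fin (k + 1) → R) :
    form (tClass k 0) x = 3 * x 0 + ∑ i : Fin k with i.val < 3, x i.succ := by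
  simp [form, tClass, dotProduct, Fin.tail, ite_mul, ← Finset.sum_filter]

end Form

lemma sq_sum_le_mul_sum_sq_of_card_le {ι R : Type*} [CommRing R] [LinearOrder R]
    [IsStrictOrderedRing R] {s : Finset ι} {n : ℕ} (hs : s.card ≤ n) (f : ι → R) :
    (∑ i ∈ s, f i) ^ 2 ≤ n * ∑ i ∈ s, f i ^ 2 :=
  sq_sum_le_card_mul_sum_sq.trans <| by gcongr

lemma nonneg_of_five_mul_sq_add_three_mul_sq_le {d x : ℤ}
    (h : 5 * (x - 3 * d) ^ 2 + 3 * (1 - x) ^ 2 ≤ 15 * (d ^ 2 + 1)) : 0 ≤ x := by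
  have completed_square : 15 * (2 * d - x) ^ 2 + (x - 6) ^ 2 ≤ 60 := by linarith
  by_contra! hx
  obtain rfl | hx : x = -1 ∨ x ≤ -2 := by lia
  · have odd_ne_zero : 2 * d - -1 ≠ 0 := by lia
    linarith [sq_pos_of_ne_zero odd_ne_zero]
  · nlinarith [sq_nonneg (2 * d - x)]

lemma three_mul_add_sum_nonneg {ι : Type*} [Fintype ι] [DecidableEq ι] {s : Finset ι}
    (hs : s.card ≤ 3) (hsc : sᶜ.card ≤ 5) {d : ℤ} {a : ι → ℤ}
    (hsq : ∑ i, a i ^ 2 = d ^ 2 + 1) (hsum : 3 * d + ∑ i, a i = 1) :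
    0 ≤ 3 * d + ∑ i ∈ s, a i := by
  apply nonneg_of_five_mul_sq_add_three_mul_sq_le (d := d)
  have cauchy_s := sq_sum_le_mul_sum_sq_of_card_le hs a
  have cauchy_sc := sq_sum_le_mul_sum_sq_of_card_le hsc a
  have sum_sc : ∑ i ∈ sᶜ, a i = 1 - (3 * d + ∑ i ∈ s, a i) := by
    linarith [s.sum_add_sum_compl a]
  rw [sum_sc] at cauchy_sc
  push_cast at cauchy_s cauchy_sc
  rw [add_sub_cancel_left]
  linarith [s.sum_add_sum_compl (a · ^ 2)]

lemma form_tClass_zero_nonneg {k : ℕ} (hk : k ≤ 8) {A : Fin (k + 1) → ℤ}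
    (hA : form A A = -1) (hKA : form (canonicalClass k) A = -1) : 0 ≤ form (tClass k 0) A := by
  rw [form_self_eq] at hA
  rw [form_canonicalClass_left] at hKA
  rw [form_tClass_zero_left]
  have card_first_three : (Finset.univ.filter fun i : Fin k => i.val < 3).card = min k 3 := by
    simp [Fin.card_filter_val_lt]
  apply three_mul_add_sum_nonneg
  · lia
  · rw [Finset.card_compl, Fintype.card_fin]
    lia
  · linarith
  · linarith

theorem Tlam_minimal_at_Ek_general {R : Type*} [CommRing R] [LinearOrder R]
    [IsStrictOrderedRing R] {k : ℕ} (hk : k ≤ 8) {lam : R} (h1 : lam ≤ 1) :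
    (∀ i : Fin k, 3 ≤ i.val → form (tClass k lam) (exceptionalClass R i) = lam) ∧
      ∀ A : Fin (k + 1) → ℤ, form A A = -1 → form (canonicalClass k) A = -1 →
        lam ≤ form (tClass k lam) (fun j => (A j : R)) := by
  refine ⟨fun i hi => form_tClass_exceptionalClass lam hi, fun A hA hKA => ?_⟩
  have hT₀ : (0 : R) ≤ (form (tClass k 0) A : ℤ) :=
    Int.cast_nonneg (form_tClass_zero_nonneg hk hA hKA)
  rw [form_tClass_intCast, hKA, neg_neg, Int.cast_one, mul_one]
  exact le_add_of_nonneg_right (mul_nonneg (sub_nonneg.2 h1) hT₀)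

lemma K7_eq : K7 = canonicalClass 7 := by
  decide

lemma K8_eq : K8 = canonicalClass 8 := by
  decide

lemma ER7_eq (i : Fin 7) : ER7 i = exceptionalClass ℝ i := by
  ext j
  simp [ER7, E7, exceptionalClass, Pi.single_apply]

lemma ER8_eq (i : Fin 8) : ER8 i = exceptionalClass ℝ i := by
  ext j
  simp [ER8, E8, exceptionalClass, Pi.single_apply]

lemma T7_eq (lam : ℝ) : T7 lam = tClass 7 lam := by
  ext j
  cases j using Fin.cases with
  | zero => simp [T7, LR7, ER7, L7, E7, tClass]
  | succ i =>
    rw [tClass, Fin.cons_succ]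
    fin_cases i <;> simp [T7, LR7, ER7, L7, E7]

lemma T8_eq (lam : ℝ) : T8 lam = tClass 8 lam := by
  ext j
  cases j using Fin.cases with
  | zero => simp [T8, LR8, ER8, L8, E8, tClass]
  | succ i =>
    rw [tClass, Fin.cons_succ]
    fin_cases i <;> simp [T8, LR8, ER8, L8, E8]

/-- For `k ∈ {7,8}` and `0 < λ ≤ 1`, the pairing `⟨T_λ, ·⟩` takes the value `λ`
on `E_k` and is `≥ λ` on every class `A` with `A·A = −1`, `K·A = −1`;
i.e. its minimum over such classes is `λ`, attained at `E_k`. -/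
theorem Tlam_minimal_at_Ek (lam : ℝ) (h0 : 0 < lam) (h1 : lam ≤ 1) :
    (formR7 (T7 lam) (ER7 6) = lam ∧
      ∀ A : Fin 8 → ℤ, form7 A A = -1 → form7 K7 A = -1 →
        lam ≤ formR7 (T7 lam) (fun j => (A j : ℝ))) ∧
    (formR8 (T8 lam) (ER8 7) = lam ∧
      ∀ A : Fin 9 → ℤ, form8 A A = -1 → form8 K8 A = -1 →
        lam ≤ formR8 (T8 lam) (fun j => (A j : ℝ))) := by
  rw [T7_eq, T8_eq, K7_eq, K8_eq, ER7_eq, ER8_eq]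
  exact ⟨(Tlam_minimal_at_Ek_general (by lia) h1).imp_left (· 6 (by decide)),
    (Tlam_minimal_at_Ek_general (by lia) h1).imp_left (· 7 (by decide))⟩

end Stmt4
end

section
/- The ℤ-linear map α : Λ₇ → Λ₇ determined by α(L) = L′ and α(Eᵢ) = E′ᵢ is a group automorphism of Λ₇ which preserves the bilinear form (⟨α(x), α(y)⟩ = ⟨x, y⟩ for all x, y) and satisfies α(K) = K; moreover, in ℚ ⊗ Λ₇, (1/12)(6L′ − 2(E′₁+E′₂+E′₃) − 3(E′₄+E′₅+E′₆+E′₇)) = −ε₇, where ε₇ = (1/12)(6L − 2(E₁+E₂+E₃) − 3(E₄+E₅+E₆+E₇)). In particular α sends ε₇ to −ε₇. -/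
namespace Stmt5

/-- The class `L` in `Λ₇ = ℤ⁸` (coordinate 0). -/
def L : Fin 8 → ℤ := fun j => if j = 0 then 1 else 0

/-- The classes `E₁,…,E₇` (indexed by `Fin 7`, so `E i` is `E_{i+1}`). -/
def E (i : Fin 7) : Fin 8 → ℤ := fun j => if j = i.succ then 1 else 0

/-- The intersection form on `Λ₇`. -/
def form (x y : Fin 8 → ℤ) : ℤ := x 0 * y 0 - ∑ i : Fin 7, x i.succ * y i.succ

/-- The canonical class `K = −3L + E₁ + ⋯ + E₇`. -/
def K : Fin 8 → ℤ := (-3 : ℤ) • L + ∑ i : Fin 7, E i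

/-- `E₄+E₅+E₆+E₇`. -/
def S : Fin 8 → ℤ := E 3 + E 4 + E 5 + E 6

/-- `E₁+⋯+E₇`. -/
def T : Fin 8 → ℤ := ∑ j : Fin 7, E j

/-- `L′ = 7L − 2(E₁+E₂+E₃) − 3(E₄+E₅+E₆+E₇)`. -/
def L' : Fin 8 → ℤ := (7 : ℤ) • L - (2 : ℤ) • (E 0 + E 1 + E 2) - (3 : ℤ) • S

/-- The classes `E′₁,…,E′₇` of equation (4.1):
`E′₁ = 2L−E₃−(E₄+⋯+E₇)`, `E′₂ = 2L−E₂−(E₄+⋯+E₇)`, `E′₃ = 2L−E₁−(E₄+⋯+E₇)`,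
and `E′ᵢ = 3L−2Eⱼ−Σ_{m≠j}E_m = 3L−Eⱼ−(E₁+⋯+E₇)` for
`(i,j) = (4,7),(5,6),(6,5),(7,4)`. -/
def E' : Fin 7 → (Fin 8 → ℤ) :=
  ![(2 : ℤ) • L - E 2 - S,
    (2 : ℤ) • L - E 1 - S,
    (2 : ℤ) • L - E 0 - S,
    (3 : ℤ) • L - E 6 - T,
    (3 : ℤ) • L - E 5 - T,
    (3 : ℤ) • L - E 4 - T,
    (3 : ℤ) • L - E 3 - T]

/-- The ℤ-linear map determined by `α(L) = L′`, `α(Eᵢ) = E′ᵢ`. -/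
def alpha (x : Fin 8 → ℤ) : Fin 8 → ℤ := x 0 • L' + ∑ i : Fin 7, x i.succ • E' i

/-- `L` in `ℚ ⊗ Λ₇`. -/
def LQ : Fin 8 → ℚ := fun j => (L j : ℚ)

/-- `Eᵢ` in `ℚ ⊗ Λ₇`. -/
def EQ (i : Fin 7) : Fin 8 → ℚ := fun j => (E i j : ℚ)

/-- `L′` in `ℚ ⊗ Λ₇`. -/
def LQ' : Fin 8 → ℚ := fun j => (L' j : ℚ)

/-- `E′ᵢ` in `ℚ ⊗ Λ₇`. -/
def EQ' (i : Fin 7) : Fin 8 → ℚ := fun j => (E' i j : ℚ)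

/-- `ε₇ = (1/12)(6L − 2(E₁+E₂+E₃) − 3(E₄+E₅+E₆+E₇))`. -/
def eps7 : Fin 8 → ℚ :=
  (1 / 12 : ℚ) • ((6 : ℚ) • LQ - (2 : ℚ) • (EQ 0 + EQ 1 + EQ 2)
    - (3 : ℚ) • (EQ 3 + EQ 4 + EQ 5 + EQ 6))

/-! The map `α` is a product of three commuting reflections: the classes `a = 2L − ∑_{i ≠ 2} Eᵢ`,
`b = L − E₂ − E₄ − E₇` and `c = L − E₂ − E₅ − E₆` are pairwise orthogonal, have square `−2` and are
orthogonal to `K`, and `α = s_a s_b s_c`. Each reflection is an isometry fixing `K`, and `α` negates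
`a`, `b` and `c`, hence also `12 ε₇ = 2a + b + c`. -/

section Reflection

variable {R M : Type*} [CommRing R] [AddCommGroup M] [Module R M]
  {B : LinearMap.BilinForm R M} {r s t : M}

/-- The reflection `y ↦ y + B(r, y) r` in a vector `r` of square `-2`, obtained from
`Module.reflection` with coroot `-B(r, ·)`. -/
def negTwoReflection (hr : B r r = -2) : M ≃ₗ[R] M :=
  Module.reflection (f := -B r) (x := r) (by simp [hr])

theorem negTwoReflection_apply (hr : B r r = -2) (y : M) :
    negTwoReflection hr y = y + B r y • r := by
  simp [negTwoReflection, Module.reflection_apply]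

theorem apply_negTwoReflection_of_isOrtho (hr : B r r = -2) (hsr : B s r = 0) (y : M) :
    B s (negTwoReflection hr y) = B s y := by
  rw [negTwoReflection_apply, map_add, map_smul, hsr, smul_zero, add_zero]

theorem apply_negTwoReflection_negTwoReflection (hB : B.IsSymm) (hr : B r r = -2) (x y : M) :
    B (negTwoReflection hr x) (negTwoReflection hr y) = B x y := by
  have hxr : B x r = B r x := hB.eq x r
  simp only [negTwoReflection_apply, map_add, map_smul, LinearMap.add_apply, LinearMap.smul_apply,
    smul_eq_mul, hr, hxr]
  ring

theorem apply_negTwoReflection_mul_mul_apply (hB : B.IsSymm) (hr : B r r = -2) (hs : B s s = -2)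
    (ht : B t t = -2) (x y : M) :
    B ((negTwoReflection hr * negTwoReflection hs * negTwoReflection ht) x)
      ((negTwoReflection hr * negTwoReflection hs * negTwoReflection ht) y) = B x y := by
  simp only [LinearEquiv.mul_apply, apply_negTwoReflection_negTwoReflection hB]

theorem negTwoReflection_mul_mul_apply (hr : B r r = -2) (hs : B s s = -2) (ht : B t t = -2)
    (hrs : B r s = 0) (hrt : B r t = 0) (hst : B s t = 0) (y : M) :
    (negTwoReflection hr * negTwoReflection hs * negTwoReflection ht) y =
      y + B r y • r + B s y • s + B t y • t := by
  rw [LinearEquiv.mul_apply, LinearEquiv.mul_apply, negTwoReflection_apply hr,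
    apply_negTwoReflection_of_isOrtho hs hrs, apply_negTwoReflection_of_isOrtho ht hrt,
    negTwoReflection_apply hs, apply_negTwoReflection_of_isOrtho ht hst, negTwoReflection_apply ht]
  abel

end Reflection

theorem eq_smul_L_add_sum_smul_E (x : Fin 8 → ℤ) :
    x = x 0 • L + ∑ i : Fin 7, x i.succ • E i := by
  ext j
  cases j using Fin.cases <;> simp [L, E, Fin.succ_ne_zero, (Fin.succ_ne_zero _).symm]

theorem form_comm (x y : Fin 8 → ℤ) : form x y = form y x := by
  simp only [form, mul_comm]

theorem form_add_left (x y z : Fin 8 → ℤ) : form (x + y) z = form x z + form y z := by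
  simp only [form, Pi.add_apply, add_mul, Finset.sum_add_distrib]
  ring

theorem form_smul_left (c : ℤ) (x y : Fin 8 → ℤ) : form (c • x) y = c * form x y := by
  simp only [form, Pi.smul_apply, smul_eq_mul, mul_assoc, Finset.mul_sum, mul_sub]

/-- The intersection form on `Λ₇` as a bundled bilinear form. -/
def intersectionForm : LinearMap.BilinForm ℤ (Fin 8 → ℤ) :=
  LinearMap.mk₂ ℤ form form_add_left form_smul_left
    (fun x y z => by simp only [form_comm x, form_add_left])
    (fun c x y => by simp only [form_comm x, form_smul_left, smul_eq_mul])

theorem intersectionForm_isSymm : intersectionForm.IsSymm :=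
  ⟨form_comm⟩

/-- The class of (the proper transform of) a line through the three points with indices `i`, `j`
and `k`. -/
def lineClass (i j k : Fin 7) : Fin 8 → ℤ := L - E i - E j - E k

/-- The class of (the proper transform of) a conic through the six points with index other
than `i`. -/
def conicClass (i : Fin 7) : Fin 8 → ℤ := (2 : ℤ) • L - T + E i

theorem form_conicClass_self (i : Fin 7) : form (conicClass i) (conicClass i) = -2 := by
  revert i; decide

theorem form_lineClass_self {i j k : Fin 7} (hij : i ≠ j) (hik : i ≠ k) (hjk : j ≠ k) :
    form (lineClass i j k) (lineClass i j k) = -2 := by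
  revert i j k; decide

theorem form_conicClass_lineClass {i j k : Fin 7} (hij : i ≠ j) (hik : i ≠ k) :
    form (conicClass i) (lineClass i j k) = 0 := by
  revert i j k; decide

theorem form_conicClass_K (i : Fin 7) : form (conicClass i) K = 0 := by
  revert i; decide

theorem form_lineClass_K (i j k : Fin 7) : form (lineClass i j k) K = 0 := by
  revert i j k; decide

/-- The product of the reflections in the pairwise orthogonal classes `2L − ∑_{i ≠ 2} Eᵢ`,
`L − E₂ − E₄ − E₇` and `L − E₂ − E₅ − E₆`; it is `α` in factored form. The indices in `Fin 7` are
one less than the subscripts. -/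
def reflectionProduct : (Fin 8 → ℤ) ≃ₗ[ℤ] (Fin 8 → ℤ) :=
  negTwoReflection (B := intersectionForm) (form_conicClass_self 1) *
    negTwoReflection (B := intersectionForm) (r := lineClass 1 3 6)
      (form_lineClass_self (by decide) (by decide) (by decide)) *
    negTwoReflection (B := intersectionForm) (r := lineClass 1 4 5)
      (form_lineClass_self (by decide) (by decide) (by decide))

theorem reflectionProduct_apply (x : Fin 8 → ℤ) :
    reflectionProduct x = x + form (conicClass 1) x • conicClass 1 +
      form (lineClass 1 3 6) x • lineClass 1 3 6 + form (lineClass 1 4 5) x • lineClass 1 4 5 :=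
  negTwoReflection_mul_mul_apply (B := intersectionForm) _ _ _
    (form_conicClass_lineClass (by decide) (by decide))
    (form_conicClass_lineClass (by decide) (by decide))
    (show form (lineClass 1 3 6) (lineClass 1 4 5) = 0 by decide) x

theorem form_reflectionProduct (x y : Fin 8 → ℤ) :
    form (reflectionProduct x) (reflectionProduct y) = form x y :=
  apply_negTwoReflection_mul_mul_apply intersectionForm_isSymm _ _ _ x y

theorem reflectionProduct_L : reflectionProduct L = L' := by
  rw [reflectionProduct_apply]
  decide

theorem reflectionProduct_E (i : Fin 7) : reflectionProduct (E i) = E' i := by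
  rw [reflectionProduct_apply]
  revert i
  decide

theorem alpha_eq_reflectionProduct : alpha = reflectionProduct := by
  funext x
  conv_rhs => rw [eq_smul_L_add_sum_smul_E x]
  simp only [alpha, map_add, map_sum, map_smul, reflectionProduct_L, reflectionProduct_E]

theorem reflectionProduct_K : reflectionProduct K = K := by
  simp only [reflectionProduct_apply, form_conicClass_K, form_lineClass_K, zero_smul, add_zero]

/-- The integral class `12 ε₇`. -/
def twelveEps7 : Fin 8 → ℤ := (6 : ℤ) • L - (2 : ℤ) • (E 0 + E 1 + E 2) - (3 : ℤ) • S

theorem twelveEps7_eq_add :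
    twelveEps7 = (2 : ℤ) • conicClass 1 + lineClass 1 3 6 + lineClass 1 4 5 := by
  decide

theorem reflectionProduct_twelveEps7 : reflectionProduct twelveEps7 = -twelveEps7 := by
  have h_conic : form (conicClass 1) twelveEps7 = -4 := by decide
  have h_line₁ : form (lineClass 1 3 6) twelveEps7 = -2 := by decide
  have h_line₂ : form (lineClass 1 4 5) twelveEps7 = -2 := by decide
  rw [reflectionProduct_apply, h_conic, h_line₁, h_line₂, twelveEps7_eq_add]
  module

/-- The inclusion of `Λ₇` into `ℚ ⊗ Λ₇`. -/
def toRat : (Fin 8 → ℤ) →+ (Fin 8 → ℚ) := (Int.castAddHom ℚ).compLeft (Fin 8)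

theorem eps7_eq_smul_toRat : eps7 = (1 / 12 : ℚ) • toRat twelveEps7 := by
  simp only [twelveEps7, S, map_sub, map_add, map_nsmul, ofNat_zsmul, ← ofNat_smul_eq_nsmul ℚ]
  rfl

theorem toRat_reflectionProduct_twelveEps7 :
    toRat (reflectionProduct twelveEps7) = (6 : ℚ) • LQ' - (2 : ℚ) • (EQ' 0 + EQ' 1 + EQ' 2)
      - (3 : ℚ) • (EQ' 3 + EQ' 4 + EQ' 5 + EQ' 6) := by
  simp only [twelveEps7, S, map_sub, map_add, map_nsmul, reflectionProduct_L,
    reflectionProduct_E, ofNat_zsmul, ← ofNat_smul_eq_nsmul ℚ]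
  rfl

theorem smul_toRat_reflectionProduct_twelveEps7 :
    (1 / 12 : ℚ) • toRat (reflectionProduct twelveEps7) = -eps7 := by
  rw [reflectionProduct_twelveEps7, map_neg, smul_neg, eps7_eq_smul_toRat]

theorem alpha_automorphism_X7 :
    alpha L = L' ∧ (∀ i : Fin 7, alpha (E i) = E' i) ∧
    (∀ x y : Fin 8 → ℤ, alpha (x + y) = alpha x + alpha y) ∧
    Function.Bijective alpha ∧
    (∀ x y : Fin 8 → ℤ, form (alpha x) (alpha y) = form x y) ∧
    alpha K = K ∧
    (1 / 12 : ℚ) • ((6 : ℚ) • LQ' - (2 : ℚ) • (EQ' 0 + EQ' 1 + EQ' 2)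
      - (3 : ℚ) • (EQ' 3 + EQ' 4 + EQ' 5 + EQ' 6)) = -eps7 ∧
    (∀ φ : (Fin 8 → ℚ) →ₗ[ℚ] (Fin 8 → ℚ),
      (∀ x : Fin 8 → ℤ, φ (fun j => (x j : ℚ)) = fun j => (alpha x j : ℚ)) →
      φ eps7 = -eps7) := by
  rw [alpha_eq_reflectionProduct, ← toRat_reflectionProduct_twelveEps7]
  refine ⟨reflectionProduct_L, reflectionProduct_E, map_add _, reflectionProduct.bijective,
    form_reflectionProduct, reflectionProduct_K, smul_toRat_reflectionProduct_twelveEps7,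
    fun φ hφ => ?_⟩
  calc φ eps7
    _ = (1 / 12 : ℚ) • φ (toRat twelveEps7) := by rw [eps7_eq_smul_toRat, map_smul]
    _ = (1 / 12 : ℚ) • toRat (reflectionProduct twelveEps7) := congrArg _ (hφ twelveEps7)
    _ = -eps7 := smul_toRat_reflectionProduct_twelveEps7

end Stmt5
end

section
/- The ℤ-linear map α : Λ₈ → Λ₈ determined by α(L) = L′ and α(Eᵢ) = E′ᵢ is a group automorphism of Λ₈ which preserves the bilinear form (⟨α(x), α(y)⟩ = ⟨x, y⟩ for all x, y) and satisfies α(K) = K; moreover, in ℚ ⊗ Λ₈, (1/30)(15L′ − 5(E′₁+E′₂+E′₃) − 6(E′₄+⋯+E′₈)) = −ε₈, where ε₈ = (1/30)(15L − 5(E₁+E₂+E₃) − 6(E₄+⋯+E₈)). In particular α sends ε₈ to −ε₈. -/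
namespace Stmt7

/-- The class `L` in `Λ₈ = ℤ⁹` (coordinate 0). -/
def L : Fin 9 → ℤ := fun j => if j = 0 then 1 else 0

/-- The classes `E₁,…,E₈` (indexed by `Fin 8`, so `E i` is `E_{i+1}`). -/
def E (i : Fin 8) : Fin 9 → ℤ := fun j => if j = i.succ then 1 else 0

/-- The intersection form on `Λ₈`. -/
def form (x y : Fin 9 → ℤ) : ℤ := x 0 * y 0 - ∑ i : Fin 8, x i.succ * y i.succ

/-- The canonical class `K = −3L + E₁ + ⋯ + E₈`. -/
def K : Fin 9 → ℤ := (-3 : ℤ) • L + ∑ i : Fin 8, E i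

/-- `E₄+⋯+E₈`. -/
def S : Fin 9 → ℤ := E 3 + E 4 + E 5 + E 6 + E 7

/-- `E₁+⋯+E₈`. -/
def T : Fin 9 → ℤ := ∑ j : Fin 8, E j

/-- `L′ = 16L − 5(E₁+E₂+E₃) − 6(E₄+⋯+E₈)`. -/
def L' : Fin 9 → ℤ := (16 : ℤ) • L - (5 : ℤ) • (E 0 + E 1 + E 2) - (6 : ℤ) • S

/-- The classes `E′₁,…,E′₈` of equation (4.2):
`E′₁ = 5L−E₁−E₂−2E₃−2(E₄+⋯+E₈)`, `E′₂ = 5L−E₁−E₃−2E₂−2(E₄+⋯+E₈)`,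
`E′₃ = 5L−E₂−E₃−2E₁−2(E₄+⋯+E₈)`, and for `4 ≤ i ≤ 8`, `j = 12−i`,
`E′ᵢ = 6L−3Eⱼ−2Σ_{m≠j}E_m = 6L−Eⱼ−2(E₁+⋯+E₈)`. -/
def E' : Fin 8 → (Fin 9 → ℤ) :=
  ![(5 : ℤ) • L - E 0 - E 1 - (2 : ℤ) • E 2 - (2 : ℤ) • S,
    (5 : ℤ) • L - E 0 - E 2 - (2 : ℤ) • E 1 - (2 : ℤ) • S,
    (5 : ℤ) • L - E 1 - E 2 - (2 : ℤ) • E 0 - (2 : ℤ) • S,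
    (6 : ℤ) • L - E 7 - (2 : ℤ) • T,
    (6 : ℤ) • L - E 6 - (2 : ℤ) • T,
    (6 : ℤ) • L - E 5 - (2 : ℤ) • T,
    (6 : ℤ) • L - E 4 - (2 : ℤ) • T,
    (6 : ℤ) • L - E 3 - (2 : ℤ) • T]

/-- The ℤ-linear map determined by `α(L) = L′`, `α(Eᵢ) = E′ᵢ`. -/
def alpha (x : Fin 9 → ℤ) : Fin 9 → ℤ := x 0 • L' + ∑ i : Fin 8, x i.succ • E' i

/-- `L` in `ℚ ⊗ Λ₈`. -/
def LQ : Fin 9 → ℚ := fun j => (L j : ℚ)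

/-- `Eᵢ` in `ℚ ⊗ Λ₈`. -/
def EQ (i : Fin 8) : Fin 9 → ℚ := fun j => (E i j : ℚ)

/-- `L′` in `ℚ ⊗ Λ₈`. -/
def LQ' : Fin 9 → ℚ := fun j => (L' j : ℚ)

/-- `E′ᵢ` in `ℚ ⊗ Λ₈`. -/
def EQ' (i : Fin 8) : Fin 9 → ℚ := fun j => (E' i j : ℚ)

/-- `ε₈ = (1/30)(15L − 5(E₁+E₂+E₃) − 6(E₄+⋯+E₈))`. -/
def eps8 : Fin 9 → ℚ :=
  (1 / 30 : ℚ) • ((15 : ℚ) • LQ - (5 : ℚ) • (EQ 0 + EQ 1 + EQ 2)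
    - (6 : ℚ) • (EQ 3 + EQ 4 + EQ 5 + EQ 6 + EQ 7))

/-!
Write `b` for the Bertini involution `x ↦ 2⟨K, x⟩K - x`, `c` for the reflection in the root
`L - E₁ - E₂ - E₃`, and `p` for the permutation of the exceptional classes exchanging `E₁` with
`E₃` and `Eᵢ` with `E₁₂₋ᵢ` for `4 ≤ i ≤ 8`. Each is an isometry fixing `K`, and `α = b ∘ c ∘ p`.
The class `30 ε₈` is invariant under `p` and orthogonal to both the root and `K`, so `p` and `c`
fix it while `b` negates it.
-/

section BilinForm

variable {R M : Type*} [CommRing R] [AddCommGroup M] [Module R M]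
  {B : LinearMap.BilinForm R M}

/-- The reflection `x ↦ x - c ⟨v, x⟩ v` as an isometry, where `c ⟨v, v⟩ = 2`. The scalar `c` stands
for `2 / ⟨v, v⟩`, so that over `ℤ` both roots and vectors of square `±1` are covered. -/
def reflectionIsometry (hB : B.IsSymm) {c : R} {v : M} (hv : c * B v v = 2) :
    B.IsometryEquiv B where
  toLinearEquiv := Module.reflection (x := v) (f := c • B v) hv
  map_app' x y := by
    change B (Module.reflection _ x) (Module.reflection _ y) = B x y
    simp only [Module.reflection_apply, LinearMap.smul_apply, map_sub, map_smul,
      LinearMap.sub_apply, smul_eq_mul, hB.eq x v]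
    linear_combination c * B v x * B v y * hv

theorem reflectionIsometry_apply (hB : B.IsSymm) {c : R} {v : M} (hv : c * B v v = 2) (x : M) :
    reflectionIsometry hB hv x = x - (c * B v x) • v :=
  Module.reflection_apply x (f := c • B v) hv

variable (B) in
/-- The isometry `x ↦ -x`. -/
def negIsometry : B.IsometryEquiv B where
  toLinearEquiv := LinearEquiv.neg R
  map_app' x y := by simp

end BilinForm

section Lattice

/-- The intersection form `form` on `Λ₈` as a bundled bilinear form. -/
def intersectionForm : LinearMap.BilinForm ℤ (Fin 9 → ℤ) :=
  LinearMap.mk₂ ℤ form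
    (fun x y z => by simp only [form, Pi.add_apply, add_mul, Finset.sum_add_distrib]; ring)
    (fun c x y => by
      simp only [form, Pi.smul_apply, smul_eq_mul, mul_assoc, ← Finset.mul_sum, mul_sub])
    (fun x y z => by simp only [form, Pi.add_apply, mul_add, Finset.sum_add_distrib]; ring)
    (fun c x y => by
      simp only [form, Pi.smul_apply, smul_eq_mul, mul_left_comm _ c, ← Finset.mul_sum, mul_sub])

@[simp]
theorem intersectionForm_apply (x y : Fin 9 → ℤ) : intersectionForm x y = form x y := rfl

theorem intersectionForm_isSymm : intersectionForm.IsSymm :=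
  ⟨fun x y => by simp [form, mul_comm]⟩

theorem eq_smul_L_add_sum_smul_E (x : Fin 9 → ℤ) : x = x 0 • L + ∑ i : Fin 8, x i.succ • E i := by
  ext j
  refine Fin.cases ?_ (fun k => ?_) j <;>
    simp [L, E, Finset.sum_apply, Fin.succ_ne_zero, (Fin.succ_ne_zero _).symm]

theorem coe_eq_alpha {f : (Fin 9 → ℤ) →ₗ[ℤ] (Fin 9 → ℤ)} (hL : f L = L')
    (hE : ∀ i, f (E i) = E' i) : ⇑f = alpha := by
  ext1 x
  conv_lhs => rw [eq_smul_L_add_sum_smul_E x]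
  simp only [map_add, map_sum, map_smul, hL, hE, alpha]

end Lattice

section Isometries

/-- The Bertini involution `x ↦ 2⟨K, x⟩K - x`, which is minus the reflection in `K`. It fixes `K`
and is `-1` on the orthogonal complement of `K`. -/
def bertini : intersectionForm.IsometryEquiv intersectionForm :=
  (reflectionIsometry intersectionForm_isSymm (c := 2) (v := K) (by decide)).trans
    (negIsometry intersectionForm)

theorem bertini_apply (x : Fin 9 → ℤ) : bertini x = (2 * form K x) • K - x :=
  (congrArg Neg.neg (reflectionIsometry_apply _ _ x)).trans (neg_sub _ _)

/-- The root `L - E₁ - E₂ - E₃`, of square `-2`, in which `cremona` reflects. -/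
def cremonaRoot : Fin 9 → ℤ := L - E 0 - E 1 - E 2

/-- The standard quadratic Cremona isometry centred at the first three points: the reflection
`x ↦ x + ⟨v, x⟩v` in the root `v = L - E₁ - E₂ - E₃`. -/
def cremona : intersectionForm.IsometryEquiv intersectionForm :=
  reflectionIsometry intersectionForm_isSymm (c := -1) (v := cremonaRoot) (by decide)

theorem cremona_apply (x : Fin 9 → ℤ) : cremona x = x + form cremonaRoot x • cremonaRoot := by
  rw [cremona, reflectionIsometry_apply, neg_one_mul, neg_smul, sub_neg_eq_add,
    intersectionForm_apply]

theorem cremona_apply_of_form_eq_zero {x : Fin 9 → ℤ} (hx : form cremonaRoot x = 0) :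
    cremona x = x := by
  rw [cremona_apply, hx, zero_smul, add_zero]

theorem cremona_K : cremona K = K := cremona_apply_of_form_eq_zero (by decide)

theorem cremona_L : cremona L = (2 : ℤ) • L - E 0 - E 1 - E 2 := by
  rw [cremona_apply]
  decide

theorem cremona_E (i : Fin 8) :
    cremona (E i) =
      ![L - E 1 - E 2, L - E 0 - E 2, L - E 0 - E 1, E 3, E 4, E 5, E 6, E 7] i := by
  rw [cremona_apply]
  revert i
  decide

/-- The isometry fixing `L` and sending `E i` to `E (σ i)`. On coordinates it acts by precomposition
with the inverse permutation. -/
def permIsometry (σ : Equiv.Perm (Fin 8)) :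
    intersectionForm.IsometryEquiv intersectionForm where
  toLinearEquiv := LinearEquiv.funCongrLeft ℤ ℤ (Equiv.Perm.decomposeFin.symm (0, σ.symm))
  map_app' x y := by
    simpa [form, LinearMap.funLeft_apply] using
      Equiv.sum_comp σ.symm fun i => x i.succ * y i.succ

theorem permIsometry_apply_zero (σ : Equiv.Perm (Fin 8)) (x : Fin 9 → ℤ) :
    permIsometry σ x 0 = x 0 :=
  congrArg x (Equiv.Perm.decomposeFin_symm_apply_zero 0 σ.symm)

theorem permIsometry_apply_succ (σ : Equiv.Perm (Fin 8)) (x : Fin 9 → ℤ) (i : Fin 8) :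
    permIsometry σ x i.succ = x (σ.symm i).succ :=
  congrArg x (by simp)

theorem permIsometry_L (σ : Equiv.Perm (Fin 8)) : permIsometry σ L = L := by
  ext j
  refine Fin.cases ?_ (fun k => ?_) j
  · rw [permIsometry_apply_zero]
  · simp [permIsometry_apply_succ, L]

theorem permIsometry_E (σ : Equiv.Perm (Fin 8)) (i : Fin 8) :
    permIsometry σ (E i) = E (σ i) := by
  ext j
  refine Fin.cases ?_ (fun k => ?_) j
  · simp [permIsometry_apply_zero, E, (Fin.succ_ne_zero _).symm]
  · simp [permIsometry_apply_succ, E, Equiv.symm_apply_eq]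

theorem permIsometry_K (σ : Equiv.Perm (Fin 8)) : permIsometry σ K = K := by
  simp only [K, map_add, map_smul, map_sum, permIsometry_L, permIsometry_E, Equiv.sum_comp σ E]

end Isometries

section Alpha

/-- The permutation of the exceptional classes underlying `α`: it exchanges `E₁` with `E₃`, and
`Eᵢ` with `E₁₂₋ᵢ` for `4 ≤ i ≤ 8`. -/
def exceptionalPerm : Equiv.Perm (Fin 8) :=
  Equiv.swap 0 2 * Equiv.swap 3 7 * Equiv.swap 4 6

/-- `α` as a bundled isometry, defined by its factorisation into a permutation of the exceptional
classes, the quadratic Cremona isometry and the Bertini involution. -/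
def alphaIsometry : intersectionForm.IsometryEquiv intersectionForm :=
  ((permIsometry exceptionalPerm).trans cremona).trans bertini

theorem alphaIsometry_apply (x : Fin 9 → ℤ) :
    alphaIsometry x = (2 * form K x) • K - cremona (permIsometry exceptionalPerm x) := by
  have form_K : form K (cremona (permIsometry exceptionalPerm x)) = form K x := calc
    _ = form (cremona (permIsometry exceptionalPerm K))
          (cremona (permIsometry exceptionalPerm x)) := by rw [permIsometry_K, cremona_K]
    _ = form (permIsometry exceptionalPerm K) (permIsometry exceptionalPerm x) :=
      cremona.map_app _ _
    _ = form K x := (permIsometry exceptionalPerm).map_app _ _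
  rw [← form_K]
  exact bertini_apply _

theorem alphaIsometry_L : alphaIsometry L = L' := by
  rw [alphaIsometry_apply, permIsometry_L, cremona_L]
  decide

theorem alphaIsometry_E (i : Fin 8) : alphaIsometry (E i) = E' i := by
  rw [alphaIsometry_apply, permIsometry_E, cremona_E]
  revert i
  decide

theorem alphaIsometry_K : alphaIsometry K = K := by
  have form_K_K : form K K = 1 := by decide
  rw [alphaIsometry_apply, permIsometry_K, cremona_K, form_K_K]
  module

theorem coe_alphaIsometry : ⇑alphaIsometry = alpha :=
  coe_eq_alpha (f := alphaIsometry.toLinearEquiv.toLinearMap) alphaIsometry_L alphaIsometry_E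

end Alpha

section Epsilon

/-- The integral class `30 ε₈`. -/
def epsClass : Fin 9 → ℤ :=
  (15 : ℤ) • L - (5 : ℤ) • (E 0 + E 1 + E 2) - (6 : ℤ) • (E 3 + E 4 + E 5 + E 6 + E 7)

theorem alphaIsometry_epsClass : alphaIsometry epsClass = -epsClass := by
  have perm_fixed : permIsometry exceptionalPerm epsClass = epsClass := by
    simp only [epsClass, map_sub, map_add, map_smul, permIsometry_L, permIsometry_E]
    decide
  have cremona_fixed : cremona epsClass = epsClass := cremona_apply_of_form_eq_zero (by decide)
  have orthogonal_K : form K epsClass = 0 := by decide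
  rw [alphaIsometry_apply, perm_fixed, cremona_fixed, orthogonal_K, mul_zero, zero_smul, zero_sub]

theorem map_epsClass {V : Type*} [AddCommGroup V] [Module ℚ V] (f : (Fin 9 → ℤ) →ₗ[ℤ] V) :
    f epsClass = (15 : ℚ) • f L - (5 : ℚ) • (f (E 0) + f (E 1) + f (E 2))
      - (6 : ℚ) • (f (E 3) + f (E 4) + f (E 5) + f (E 6) + f (E 7)) := by
  simp only [epsClass, map_sub, map_add, map_smul]
  module

/-- The inclusion `Λ₈ → ℚ ⊗ Λ₈`, in coordinates. -/
def toRat : (Fin 9 → ℤ) →ₗ[ℤ] (Fin 9 → ℚ) :=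
  (Algebra.linearMap ℤ ℚ).compLeft (Fin 9)

theorem eps8_eq_smul_toRat : eps8 = (1 / 30 : ℚ) • toRat epsClass :=
  congrArg ((1 / 30 : ℚ) • ·) (map_epsClass toRat).symm

theorem smul_toRat_alpha_epsClass : (1 / 30 : ℚ) • toRat (alpha epsClass) = -eps8 := by
  rw [← coe_alphaIsometry, alphaIsometry_epsClass, map_neg, smul_neg, eps8_eq_smul_toRat]

theorem eps8_primed_eq_smul_toRat :
    (1 / 30 : ℚ) • ((15 : ℚ) • LQ' - (5 : ℚ) • (EQ' 0 + EQ' 1 + EQ' 2)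
      - (6 : ℚ) • (EQ' 3 + EQ' 4 + EQ' 5 + EQ' 6 + EQ' 7)) =
      (1 / 30 : ℚ) • toRat (alpha epsClass) := by
  have h := map_epsClass (toRat ∘ₗ alphaIsometry.toLinearEquiv.toLinearMap)
  simp only [LinearMap.comp_apply, LinearEquiv.coe_coe,
    LinearMap.BilinForm.IsometryEquiv.coe_toLinearEquiv, alphaIsometry_L, alphaIsometry_E] at h
  rw [← coe_alphaIsometry, h]
  rfl

theorem map_eps8 {φ : (Fin 9 → ℚ) →ₗ[ℚ] (Fin 9 → ℚ)}
    (hφ : ∀ x, φ (toRat x) = toRat (alpha x)) : φ eps8 = -eps8 := by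
  rw [eps8_eq_smul_toRat, map_smul, hφ, smul_toRat_alpha_epsClass, eps8_eq_smul_toRat]

end Epsilon

theorem alpha_automorphism_X8 :
    alpha L = L' ∧ (∀ i : Fin 8, alpha (E i) = E' i) ∧
    (∀ x y : Fin 9 → ℤ, alpha (x + y) = alpha x + alpha y) ∧
    Function.Bijective alpha ∧
    (∀ x y : Fin 9 → ℤ, form (alpha x) (alpha y) = form x y) ∧
    alpha K = K ∧
    (1 / 30 : ℚ) • ((15 : ℚ) • LQ' - (5 : ℚ) • (EQ' 0 + EQ' 1 + EQ' 2)
      - (6 : ℚ) • (EQ' 3 + EQ' 4 + EQ' 5 + EQ' 6 + EQ' 7)) = -eps8 ∧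
    (∀ φ : (Fin 9 → ℚ) →ₗ[ℚ] (Fin 9 → ℚ),
      (∀ x : Fin 9 → ℤ, φ (fun j => (x j : ℚ)) = fun j => (alpha x j : ℚ)) →
      φ eps8 = -eps8) := by
  have hα := coe_alphaIsometry
  refine ⟨hα ▸ alphaIsometry_L, hα ▸ alphaIsometry_E, hα ▸ map_add alphaIsometry,
    hα ▸ EquivLike.bijective alphaIsometry, ?_, hα ▸ alphaIsometry_K, ?_, fun φ hφ => map_eps8 hφ⟩
  · rw [← hα]
    exact fun x y => alphaIsometry.map_app y x
  · rw [eps8_primed_eq_smul_toRat, smul_toRat_alpha_epsClass]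

end Stmt7
end

section
/- The subgroup {A ∈ Λ₇ : ⟨A,B⟩ = 0 for every B ∈ {E₁−E₂, E₂−E₃, L−(E₁+E₂+E₃), E₄−E₅, E₅−E₆, E₆−E₇}} is exactly the subgroup of Λ₇ generated by the two elements 3L − (E₁+E₂+E₃) and E₄+E₅+E₆+E₇. -/
/-!
Orthogonality to `Eᵢ - Eⱼ` says that the `i`-th and `j`-th coordinates agree, so a class orthogonal
to the five differences is `a L + b (E₁ + E₂ + E₃) + c (E₄ + E₅ + E₆ + E₇)`; orthogonality to
`L - (E₁ + E₂ + E₃)` then forces `a = -3 b`.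
-/

namespace Stmt9

/-- The class `L` in `Λ₇ = ℤ⁸` (coordinate 0). -/
def L : Fin 8 → ℤ := fun j => if j = 0 then 1 else 0

/-- The classes `E₁,…,E₇` (indexed by `Fin 7`, so `E i` is `E_{i+1}`). -/
def E (i : Fin 7) : Fin 8 → ℤ := fun j => if j = i.succ then 1 else 0

/-- The intersection form on `Λ₇`. -/
def form (x y : Fin 8 → ℤ) : ℤ := x 0 * y 0 - ∑ i : Fin 7, x i.succ * y i.succ

theorem eq_smul_L_add_sum_smul_E (x : Fin 8 → ℤ) :
    x = x 0 • L + ∑ i : Fin 7, x i.succ • E i := by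
  ext j
  cases j using Fin.cases <;> simp [L, E, (Fin.succ_ne_zero _).symm]

theorem form_add_right (x y z : Fin 8 → ℤ) : form x (y + z) = form x y + form x z := by
  simp only [form, Pi.add_apply, mul_add, Finset.sum_add_distrib]
  ring

theorem form_sub_right (x y z : Fin 8 → ℤ) : form x (y - z) = form x y - form x z := by
  simp only [form, Pi.sub_apply, mul_sub, Finset.sum_sub_distrib]
  ring

theorem form_L_right (x : Fin 8 → ℤ) : form x L = x 0 := by
  simp [form, L]

theorem form_E_right (x : Fin 8 → ℤ) (i : Fin 7) : form x (E i) = -x i.succ := by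
  simp [form, E, (Fin.succ_ne_zero i).symm]

theorem form_E_sub_E_eq_zero_iff (x : Fin 8 → ℤ) (i j : Fin 7) :
    form x (E i - E j) = 0 ↔ x i.succ = x j.succ := by
  rw [form_sub_right, form_E_right, form_E_right, sub_eq_zero, neg_inj]

theorem form_L_sub_E_add_E_add_E_eq_zero_iff (x : Fin 8 → ℤ) (i j k : Fin 7) :
    form x (L - (E i + E j + E k)) = 0 ↔ x 0 = -(x i.succ + x j.succ + x k.succ) := by
  simp only [form_sub_right, form_add_right, form_L_right, form_E_right, sub_eq_zero, neg_add]

theorem orthogonal_complement_X7 :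
    {A : Fin 8 → ℤ |
      ∀ B ∈ ({E 0 - E 1, E 1 - E 2, L - (E 0 + E 1 + E 2),
        E 3 - E 4, E 4 - E 5, E 5 - E 6} : Set (Fin 8 → ℤ)), form A B = 0} =
    ((AddSubgroup.closure
        {(3 : ℤ) • L - (E 0 + E 1 + E 2), E 3 + E 4 + E 5 + E 6} :
      AddSubgroup (Fin 8 → ℤ)) : Set (Fin 8 → ℤ)) := by
  ext A
  simp only [Set.mem_ofPred_eq, Set.mem_insert_iff, Set.mem_singleton_iff, forall_eq_or_imp,
    forall_eq, SetLike.mem_coe, AddSubgroup.mem_closure_pair, form_E_sub_E_eq_zero_iff,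
    form_L_sub_E_add_E_add_E_eq_zero_iff, Fin.reduceSucc]
  constructor
  · rintro ⟨h₁₂, h₂₃, h₀, h₄₅, h₅₆, h₆₇⟩
    have h₀₃ : A 0 = -3 * A 3 := by lia
    refine ⟨-A 3, A 7, Eq.symm ?_⟩
    calc
      A = A 0 • L + ∑ i : Fin 7, A i.succ • E i := eq_smul_L_add_sum_smul_E A
      _ = (-3 * A 3) • L + A 3 • (E 0 + E 1 + E 2) + A 7 • (E 3 + E 4 + E 5 + E 6) := by
        simp only [Fin.sum_univ_seven, Fin.reduceSucc, h₀₃, h₁₂, h₂₃, h₄₅, h₅₆, h₆₇]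
        module
      _ = -A 3 • ((3 : ℤ) • L - (E 0 + E 1 + E 2)) + A 7 • (E 3 + E 4 + E 5 + E 6) := by
        module
  · rintro ⟨m, n, rfl⟩
    have mul_three : m * 3 = m + (m + m) := by ring
    simpa [L, E] using mul_three

end Stmt9
end

section
/- The subgroup {A ∈ Λ₈ : ⟨A,B⟩ = 0 for every B ∈ {E₁−E₂, E₂−E₃, L−(E₁+E₂+E₃), E₄−E₅, E₅−E₆, E₆−E₇, E₇−E₈}} is exactly the subgroup of Λ₈ generated by the two elements 3L − (E₁+E₂+E₃) and E₄+E₅+E₆+E₇+E₈. -/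
namespace Stmt10

/-- The class `L` in `Λ₈ = ℤ⁹` (coordinate 0). -/
def L : Fin 9 → ℤ := fun j => if j = 0 then 1 else 0

/-- The classes `E₁,…,E₈` (indexed by `Fin 8`, so `E i` is `E_{i+1}`). -/
def E (i : Fin 8) : Fin 9 → ℤ := fun j => if j = i.succ then 1 else 0

/-- The intersection form on `Λ₈`. -/
def form (x y : Fin 9 → ℤ) : ℤ := x 0 * y 0 - ∑ i : Fin 8, x i.succ * y i.succ

/-!
Pairing with `Eᵢ − Eⱼ` compares the `i`-th and `j`-th exceptional coordinates, so the two chains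
`E₁ − E₂, E₂ − E₃` and `E₄ − E₅, …, E₇ − E₈` force the coordinates of an orthogonal class to be
constant, say `-m` on the first block and `n` on the second. The remaining class
`L − (E₁ + E₂ + E₃)` joins the first block to `L` and forces the `L`-coordinate to be `3m`.
-/

/-- The classes of the `(-2)`-curves contracted by the resolution `X₈ → Z`. These are simple
roots: the first three form an `A₂ + A₁` configuration on `L, E₁, E₂, E₃`, the last four an `A₄`
chain on `E₄, …, E₈`. -/
def contractedClasses : Set (Fin 9 → ℤ) :=
  {E 0 - E 1, E 1 - E 2, L - (E 0 + E 1 + E 2),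
    E 3 - E 4, E 4 - E 5, E 5 - E 6, E 6 - E 7}

section Form

variable (x y z : Fin 9 → ℤ) (i j k : Fin 8)

theorem form_add_right : form x (y + z) = form x y + form x z := by
  simp only [form, Pi.add_apply, mul_add, Finset.sum_add_distrib]
  ring

theorem form_sub_right : form x (y - z) = form x y - form x z := by
  simp only [form, Pi.sub_apply, mul_sub, Finset.sum_sub_distrib]
  ring

theorem form_L_right : form x L = x 0 := by
  simp [form, L]

theorem form_E_right : form x (E i) = -x i.succ := by
  simp [form, E, (Fin.succ_ne_zero i).symm]

theorem form_E_sub_E_right_eq_zero_iff : form x (E i - E j) = 0 ↔ x i.succ = x j.succ := by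
  rw [form_sub_right, form_E_right, form_E_right, sub_eq_zero, neg_inj]

theorem form_L_sub_E_add_E_add_E_right :
    form x (L - (E i + E j + E k)) = x 0 + (x i.succ + x j.succ + x k.succ) := by
  simp only [form_sub_right, form_add_right, form_L_right, form_E_right]
  ring

end Form

theorem forall_mem_contractedClasses_form_eq_zero_iff (A : Fin 9 → ℤ) :
    (∀ B ∈ contractedClasses, form A B = 0) ↔
      A 1 = A 2 ∧ A 2 = A 3 ∧ A 0 + (A 1 + A 2 + A 3) = 0 ∧
        A 4 = A 5 ∧ A 5 = A 6 ∧ A 6 = A 7 ∧ A 7 = A 8 := by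
  simp only [contractedClasses, Set.mem_insert_iff, Set.mem_singleton_iff, forall_eq_or_imp,
    forall_eq, form_E_sub_E_right_eq_zero_iff, form_L_sub_E_add_E_add_E_right, Fin.reduceSucc]

/-- The class `3m L − m(E₁ + E₂ + E₃) + n(E₄ + ⋯ + E₈)`, in coordinates; its coordinates are
constant on each of the two blocks of exceptional classes. -/
def blockConstant (m n : ℤ) : Fin 9 → ℤ := ![3 * m, -m, -m, -m, n, n, n, n, n]

theorem zsmul_add_zsmul_eq_blockConstant (m n : ℤ) :
    m • ((3 : ℤ) • L - (E 0 + E 1 + E 2)) + n • (E 3 + E 4 + E 5 + E 6 + E 7) =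
      blockConstant m n := by
  ext j
  fin_cases j <;> simp [blockConstant, L, E, Fin.ext_iff, mul_comm]

theorem exists_blockConstant_eq_iff (A : Fin 9 → ℤ) :
    (∃ m n, blockConstant m n = A) ↔
      A 1 = A 2 ∧ A 2 = A 3 ∧ A 0 + (A 1 + A 2 + A 3) = 0 ∧
        A 4 = A 5 ∧ A 5 = A 6 ∧ A 6 = A 7 ∧ A 7 = A 8 := by
  constructor
  · rintro ⟨m, n, rfl⟩
    have hL : 3 * m + (-m + -m + -m) = 0 := by ring
    exact ⟨rfl, rfl, hL, rfl, rfl, rfl, rfl⟩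
  · rintro ⟨h₁₂, h₂₃, hL, h₄₅, h₅₆, h₆₇, h₇₈⟩
    have h₁₃ : A 1 = A 3 := h₁₂.trans h₂₃
    have h₄₆ : A 4 = A 6 := h₄₅.trans h₅₆
    have h₄₇ : A 4 = A 7 := h₄₆.trans h₆₇
    have h₀ : 3 * -A 1 = A 0 := by linarith
    refine ⟨-A 1, A 4, ?_⟩
    ext j
    fin_cases j
    exacts [h₀, neg_neg _, (neg_neg _).trans h₁₂, (neg_neg _).trans h₁₃,
      rfl, h₄₅, h₄₆, h₄₇, h₄₇.trans h₇₈]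

theorem orthogonal_complement_X8 :
    {A : Fin 9 → ℤ |
      ∀ B ∈ ({E 0 - E 1, E 1 - E 2, L - (E 0 + E 1 + E 2),
        E 3 - E 4, E 4 - E 5, E 5 - E 6, E 6 - E 7} : Set (Fin 9 → ℤ)),
        form A B = 0} =
    ((AddSubgroup.closure
        {(3 : ℤ) • L - (E 0 + E 1 + E 2), E 3 + E 4 + E 5 + E 6 + E 7} :
      AddSubgroup (Fin 9 → ℤ)) : Set (Fin 9 → ℤ)) := by
  ext A
  calc
    _ ↔ ∃ m n, blockConstant m n = A :=
      (forall_mem_contractedClasses_form_eq_zero_iff A).trans (exists_blockConstant_eq_iff A).symm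
    _ ↔ _ := by
      simp only [SetLike.mem_coe, AddSubgroup.mem_closure_pair, zsmul_add_zsmul_eq_blockConstant]

end Stmt10
end

section
/- Define in Λ₅ the classes L̂ = 3L − (E₁+E₂+E₃+E₄) − 2E₅, Ê₁ = L − E₃ − E₅, Ê₂ = L − E₂ − E₅, Ê₃ = L − E₁ − E₅, Ê₄ = 2L − (E₁+E₂+E₃+E₄+E₅), and Ê₅ = L − E₄ − E₅. Then the ℤ-linear map ψ : Λ₅ → Λ₅ determined by ψ(L) = L̂ and ψ(Eᵢ) = Êᵢ is a group automorphism of Λ₅ which preserves the bilinear form and satisfies ψ(K) = K; moreover ψ(3L − (E₁+E₂+E₃) − 3E₄ − 3E₅) = −(3L − (E₁+E₂+E₃) − 3E₄ − 3E₅). -/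
/-!
The classes `L̂, Ê₁, …, Ê₅` have the same pairings as the basis `L, E₁, …, E₅`, so `ψ` preserves the
form by bilinearity. For an isometry `f` with matrix `A` and a form with Gram matrix `G`,
`Aᵀ G A = G` shows that `det A` divides `det G`, which is a unit because the lattice is unimodular;
hence `ψ` is invertible over `ℤ`.
-/

namespace Stmt15

/-- The class `L` in `Λ₅ = ℤ⁶` (coordinate 0). -/
def L : Fin 6 → ℤ := fun j => if j = 0 then 1 else 0

/-- The classes `E₁,…,E₅` (indexed by `Fin 5`, so `E i` is `E_{i+1}`). -/
def E (i : Fin 5) : Fin 6 → ℤ := fun j => if j = i.succ then 1 else 0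

/-- The intersection form on `Λ₅`. -/
def form (x y : Fin 6 → ℤ) : ℤ := x 0 * y 0 - ∑ i : Fin 5, x i.succ * y i.succ

/-- The canonical class `K = −3L + E₁ + ⋯ + E₅`. -/
def K : Fin 6 → ℤ := (-3 : ℤ) • L + ∑ i : Fin 5, E i

/-- `L̂ = 3L − (E₁+E₂+E₃+E₄) − 2E₅`. -/
def Lhat : Fin 6 → ℤ := (3 : ℤ) • L - (E 0 + E 1 + E 2 + E 3) - (2 : ℤ) • E 4

/-- `Ê₁ = L−E₃−E₅`, `Ê₂ = L−E₂−E₅`, `Ê₃ = L−E₁−E₅`,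
`Ê₄ = 2L−(E₁+E₂+E₃+E₄+E₅)`, `Ê₅ = L−E₄−E₅`. -/
def Ehat : Fin 5 → (Fin 6 → ℤ) :=
  ![L - E 2 - E 4,
    L - E 1 - E 4,
    L - E 0 - E 4,
    (2 : ℤ) • L - (E 0 + E 1 + E 2 + E 3 + E 4),
    L - E 3 - E 4]

/-- The ℤ-linear map determined by `ψ(L) = L̂`, `ψ(Eᵢ) = Êᵢ`. -/
def psi (x : Fin 6 → ℤ) : Fin 6 → ℤ := x 0 • Lhat + ∑ i : Fin 5, x i.succ • Ehat i

/-- `3L − (E₁+E₂+E₃) − 3E₄ − 3E₅`. -/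
def v : Fin 6 → ℤ :=
  (3 : ℤ) • L - (E 0 + E 1 + E 2) - (3 : ℤ) • E 3 - (3 : ℤ) • E 4

section UnimodularForm

variable {R M ι : Type*} [CommRing R] [AddCommGroup M] [Module R M]
  {B : LinearMap.BilinForm R M} {f : Module.End R M}

theorem comp_constr_eq_of_gram_eq (b : Module.Basis ι R M) {w : ι → M}
    (hw : ∀ i j, B (w i) (w j) = B (b i) (b j)) :
    B.comp (b.constr R w) (b.constr R w) = B :=
  LinearMap.BilinForm.ext_basis b fun i j => by
    simpa only [LinearMap.BilinForm.comp_apply, Module.Basis.constr_basis] using hw i j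

variable [Fintype ι] [DecidableEq ι]

theorem det_dvd_det_gram_of_comp_eq (b : Module.Basis ι R M) (hf : B.comp f f = B) :
    LinearMap.det f ∣ (LinearMap.BilinForm.toMatrix b B).det := by
  have gram_eq : (LinearMap.toMatrix b b f).transpose * LinearMap.BilinForm.toMatrix b B *
      LinearMap.toMatrix b b f = LinearMap.BilinForm.toMatrix b B := by
    rw [← LinearMap.BilinForm.toMatrix_comp, hf]
  rw [← gram_eq, Matrix.det_mul, LinearMap.det_toMatrix]
  exact dvd_mul_left _ _

theorem bijective_of_comp_eq_of_isUnit_det_gram (b : Module.Basis ι R M)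
    (hB : IsUnit (LinearMap.BilinForm.toMatrix b B).det) (hf : B.comp f f = B) :
    Function.Bijective f := by
  have det_isUnit : IsUnit (LinearMap.det f) :=
    isUnit_of_dvd_unit (det_dvd_det_gram_of_comp_eq b hf) hB
  exact (LinearEquiv.ofIsUnitDet (f := f) (v := b) (v' := b)
    (by rwa [LinearMap.det_toMatrix])).bijective

end UnimodularForm

/-- The Gram matrix `diag(1, -1, …, -1)` of the intersection form in the basis `L, E₁, …, E₅`. -/
def gram : Matrix (Fin 6) (Fin 6) ℤ :=
  Matrix.diagonal (Fin.cons 1 fun _ => -1)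

/-- The intersection form `form`, bundled as a bilinear form. -/
def intersectionForm : LinearMap.BilinForm ℤ (Fin 6 → ℤ) :=
  Matrix.toBilin' gram

theorem intersectionForm_apply (x y : Fin 6 → ℤ) : intersectionForm x y = form x y := by
  simp only [intersectionForm, gram, form, Matrix.toBilin'_apply', dotProduct,
    Matrix.mulVec_diagonal, Fin.sum_univ_succ (n := 5), Fin.cons_zero, Fin.cons_succ, one_mul,
    neg_one_mul, mul_neg, Finset.sum_neg_distrib, sub_eq_add_neg]

theorem isUnit_det_toMatrix_intersectionForm :
    IsUnit (LinearMap.BilinForm.toMatrix (Pi.basisFun ℤ (Fin 6)) intersectionForm).det := by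
  rw [intersectionForm, LinearMap.BilinForm.toMatrix_basisFun,
    LinearMap.BilinForm.toMatrix'_toBilin', gram, Matrix.det_diagonal]
  decide

/-- The family `L̂, Ê₁, …, Ê₅` of images of the standard basis under `ψ`. -/
def hatFamily : Fin 6 → (Fin 6 → ℤ) :=
  Fin.cons Lhat Ehat

theorem form_hatFamily (i j : Fin 6) :
    form (hatFamily i) (hatFamily j) = form (Pi.single i 1) (Pi.single j 1) := by
  decide +revert

/-- The map `psi`, bundled as a `ℤ`-linear endomorphism. -/
noncomputable def psiLinear : Module.End ℤ (Fin 6 → ℤ) :=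
  (Pi.basisFun ℤ (Fin 6)).constr ℤ hatFamily

theorem coe_psiLinear : ⇑psiLinear = psi := by
  ext1 x
  simp only [psiLinear, Module.Basis.constr_apply_fintype, Fin.sum_univ_succ (n := 5), hatFamily,
    Fin.cons_zero, Fin.cons_succ, Pi.basisFun_equivFun, LinearEquiv.refl_apply, psi]

theorem intersectionForm_comp_psiLinear :
    intersectionForm.comp psiLinear psiLinear = intersectionForm :=
  comp_constr_eq_of_gram_eq _ fun i j => by
    simpa only [intersectionForm_apply, Pi.basisFun_apply] using form_hatFamily i j

theorem psiLinear_bijective : Function.Bijective psiLinear :=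
  bijective_of_comp_eq_of_isUnit_det_gram _ isUnit_det_toMatrix_intersectionForm
    intersectionForm_comp_psiLinear

theorem form_psiLinear (x y : Fin 6 → ℤ) : form (psiLinear x) (psiLinear y) = form x y := by
  simpa only [LinearMap.BilinForm.comp_apply, intersectionForm_apply] using
    LinearMap.congr_fun₂ intersectionForm_comp_psiLinear x y

theorem psiLinear_L : psiLinear L = Lhat := by
  have L_eq : L = Pi.basisFun ℤ (Fin 6) 0 := by
    ext j
    simp [L, Pi.single_apply]
  rw [L_eq, psiLinear, Module.Basis.constr_basis, hatFamily, Fin.cons_zero]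

theorem psiLinear_E (i : Fin 5) : psiLinear (E i) = Ehat i := by
  have E_eq : E i = Pi.basisFun ℤ (Fin 6) i.succ := by
    ext j
    simp [E, Pi.single_apply]
  rw [E_eq, psiLinear, Module.Basis.constr_basis, hatFamily, Fin.cons_succ]

theorem psiLinear_K : psiLinear K = K := by
  have hat_combination : (-3 : ℤ) • Lhat + ∑ i, Ehat i = K := by decide
  simpa only [K, map_add, map_smul, map_sum, psiLinear_L, psiLinear_E] using hat_combination

theorem psiLinear_v : psiLinear v = -v := by
  have hat_combination : (3 : ℤ) • Lhat - (Ehat 0 + Ehat 1 + Ehat 2) - (3 : ℤ) • Ehat 3 -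
      (3 : ℤ) • Ehat 4 = -v := by decide
  simpa only [v, map_add, map_sub, map_smul, psiLinear_L, psiLinear_E] using hat_combination

theorem psi_automorphism_X5 :
    psi L = Lhat ∧ (∀ i : Fin 5, psi (E i) = Ehat i) ∧
    (∀ x y : Fin 6 → ℤ, psi (x + y) = psi x + psi y) ∧
    Function.Bijective psi ∧
    (∀ x y : Fin 6 → ℤ, form (psi x) (psi y) = form x y) ∧
    psi K = K ∧
    psi v = -v := by
  rw [← coe_psiLinear]
  exact ⟨psiLinear_L, psiLinear_E, map_add psiLinear, psiLinear_bijective, form_psiLinear,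
    psiLinear_K, psiLinear_v⟩

end Stmt15
end
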